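/- Let A be a unital C*-algebra with a comultiplication φ : A → A ⊗ A (minimal tensor product), and let h be a faithful state on A which is both left and right invariant: (ι ⊗ h)φ(a) = h(a)1 and (h ⊗ ι)φ(a) = h(a)1 for all a ∈ A. Then the map T_1 : A ⊗_h A → A ⊗ A extending a ⊗ b ↦ φ(a)(1 ⊗ b) is injective; in particular, if x ∈ A ⊙ A satisfies T_1(x) = 0 then x = 0. -/

import Mathlib

open scoped TensorProduct

/-- The Haagerup norm of an element of the algebraic tensor product `A ⊙ A`:
the infimum of `‖∑ pᵢ pᵢ*‖^{1/2} · ‖∑ qᵢ* qᵢ‖^{1/2}` over all finite representations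
`x = ∑ pᵢ ⊗ qᵢ`. -/
noncomputable def haagerupNorm (A : Type*) [NonUnitalNormedRing A] [StarRing A]
    [NormedSpace ℂ A] (x : A ⊗[ℂ] A) : ℝ :=
  sInf { c : ℝ | ∃ (n : ℕ) (p q : Fin n → A),
    x = ∑ i, p i ⊗ₜ[ℂ] q i ∧
    c = Real.sqrt ‖∑ i, p i * star (p i)‖ * Real.sqrt ‖∑ i, star (q i) * q i‖ }

open scoped ComplexOrder

/-!
Slicing the first leg with `h` and using invariance, `(h ⊗ ι)(φ(a)(1 ⊗ b)) = h(a) b`. Suppose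
`T₁ z = 0` with `z = ∑ pᵢ ⊗ qᵢ`, and let `y = ∑ g(qᵢ) pᵢ` be the slice of `z` by a functional `g`.
Multiplying `T₁ z` by `φ(y*)` on the left and applying `h ⊗ g` gives
`0 = ∑ h(y* pᵢ) g(qᵢ) = h(y* y)`, so `y = 0` by faithfulness.

It remains to see that the slices separate the points of the Haagerup tensor product. The series
can be chosen with `∑ pᵢ pᵢ*` and `∑ qᵢ* qᵢ` norm convergent, and a unitary change of the summation
basis in `ℓ²(I)` changes neither these sums nor `z`. The vanishing of the slices gives a basis in
which every term `p'ₐ ⊗ q'ₐ` of the new series has `p'ₐ = 0` or `q'ₐ = 0`. As the new families are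
themselves infinite sums, the change of basis is carried out on finite sections, uniformly in the
section.
-/

section SquareSummable

open scoped lp InnerProductSpace ComplexConjugate

variable {𝕜 E F I : Type*} [RCLike 𝕜] [NormedAddCommGroup E] [NormedSpace 𝕜 E]
  [NormedAddCommGroup F] [NormedSpace 𝕜 F]

/-- A family `x` is weakly square-summable if `eᵢ ↦ xᵢ` extends to a bounded operator
`ℓ²(I) → E`; this is expressed by bounding the finite sections of that operator uniformly. -/
def WeaklySquareSummable (𝕜 : Type*) [RCLike 𝕜] [NormedSpace 𝕜 E] (x : I → E) : Prop :=
  ∃ C : ℝ, 0 ≤ C ∧ ∀ (s : Finset I) (v : I → 𝕜),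
    ‖∑ i ∈ s, v i • x i‖ ≤ C * √(∑ i ∈ s, ‖v i‖ ^ 2)

lemma summable_norm_sq_lp (v : ℓ²(I, 𝕜)) : Summable fun i ↦ ‖v i‖ ^ 2 := by
  simpa using (lp.memℓp v).summable (by norm_num)

lemma sqrt_sum_norm_apply_sq_le {x : I → E} {s : Finset I} {C : ℝ} (hC : 0 ≤ C)
    (hx : ∀ v : I → 𝕜, ‖∑ i ∈ s, v i • x i‖ ≤ C * √(∑ i ∈ s, ‖v i‖ ^ 2)) (f : E →L[𝕜] 𝕜) :
    √(∑ i ∈ s, ‖f (x i)‖ ^ 2) ≤ ‖f‖ * C := by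
  set N := √(∑ i ∈ s, ‖f (x i)‖ ^ 2) with hN
  have f_dual : f (∑ i ∈ s, conj (f (x i)) • x i) = ((N ^ 2 : ℝ) : 𝕜) := by
    rw [hN, Real.sq_sqrt (by positivity)]
    simp [RCLike.conj_mul]
  have sq_le : N * N ≤ ‖f‖ * C * N := by
    calc N * N = ‖f (∑ i ∈ s, conj (f (x i)) • x i)‖ := by
          rw [f_dual, RCLike.norm_ofReal, abs_of_nonneg (by positivity), sq]
      _ ≤ ‖f‖ * ‖∑ i ∈ s, conj (f (x i)) • x i‖ := f.le_opNorm _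
      _ ≤ ‖f‖ * (C * N) := by
          gcongr
          simpa only [RCLike.norm_conj] using hx fun i ↦ conj (f (x i))
      _ = ‖f‖ * C * N := by ring
  have N_nonneg : 0 ≤ N := Real.sqrt_nonneg _
  rcases N_nonneg.eq_or_lt with N_zero | N_pos
  · exact N_zero.symm.trans_le (by positivity)
  · exact le_of_mul_le_mul_right sq_le N_pos

namespace WeaklySquareSummable

lemma summable_smul [CompleteSpace E] {x : I → E} (hx : WeaklySquareSummable 𝕜 x)
    (v : ℓ²(I, 𝕜)) : Summable fun i ↦ v i • x i := by
  obtain ⟨C, hC, hx⟩ := hx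
  refine summable_iff_vanishing_norm.2 fun ε hε ↦ ?_
  obtain ⟨s, hs⟩ := summable_iff_vanishing_norm.1 (summable_norm_sq_lp v)
    ((ε / (C + 1)) ^ 2) (by positivity)
  refine ⟨s, fun t ht ↦ ?_⟩
  have tail_lt : √(∑ i ∈ t, ‖v i‖ ^ 2) < ε / (C + 1) :=
    (Real.sqrt_lt' (by positivity)).2 ((le_abs_self _).trans_lt (hs t ht))
  calc ‖∑ i ∈ t, v i • x i‖ ≤ C * √(∑ i ∈ t, ‖v i‖ ^ 2) := hx t v
    _ ≤ (C + 1) * √(∑ i ∈ t, ‖v i‖ ^ 2) := by gcongr; linarith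
    _ < (C + 1) * (ε / (C + 1)) := by gcongr
    _ = ε := by field_simp

lemma memℓp_apply {x : I → E} (hx : WeaklySquareSummable 𝕜 x) (f : E →L[𝕜] 𝕜) :
    Memℓp (fun i ↦ f (x i)) 2 := by
  obtain ⟨C, hC, hx⟩ := hx
  refine memℓp_gen' (C := (‖f‖ * C) ^ 2) fun s ↦ ?_
  simpa using (Real.sqrt_le_left (by positivity)).1 (sqrt_sum_norm_apply_sq_le hC (hx s) f)

/-- The square-summable sequence `(f (x i))ᵢ` of a functional `f`, i.e. the value at `f` of the
transpose of the operator `ℓ²(I) → E`, `eᵢ ↦ xᵢ`. -/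
def dualSeq {x : I → E} (hx : WeaklySquareSummable 𝕜 x) (f : E →L[𝕜] 𝕜) : ℓ²(I, 𝕜) :=
  ⟨fun i ↦ f (x i), hx.memℓp_apply f⟩

lemma inner_star_dualSeq {x : I → E} (hx : WeaklySquareSummable 𝕜 x) (f : E →L[𝕜] 𝕜)
    {v : ℓ²(I, 𝕜)} {z : E} (hz : HasSum (fun i ↦ v i • x i) z) :
    ⟪star (hx.dualSeq f), v⟫_𝕜 = f z := by
  refine (lp.hasSum_inner (star (hx.dualSeq f)) v).unique ?_
  simpa [dualSeq] using hz.mapL f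

lemma inner_dualSeq {x : I → E} (hx : WeaklySquareSummable 𝕜 x) (f : E →L[𝕜] 𝕜)
    {v : ℓ²(I, 𝕜)} {z : E} (hz : HasSum (fun i ↦ conj (v i) • x i) z) :
    ⟪v, hx.dualSeq f⟫_𝕜 = f z := by
  refine (lp.hasSum_inner v (hx.dualSeq f)).unique ?_
  simpa [dualSeq, mul_comm] using hz.mapL f

end WeaklySquareSummable

lemma exists_hilbertBasis_mem_or_mem_orthogonal {H : Type*} [NormedAddCommGroup H]
    [InnerProductSpace 𝕜 H] [CompleteSpace H] (K : Submodule 𝕜 H) [CompleteSpace K] :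
    ∃ (w : Set H) (b : HilbertBasis w 𝕜 H), ∀ a, b a ∈ K ∨ b a ∈ Kᗮ := by
  obtain ⟨u, c, -⟩ := exists_hilbertBasis 𝕜 K
  have c_orthonormal : Orthonormal 𝕜 (K.subtypeₗᵢ ∘ c) :=
    c.orthonormal.comp_linearIsometry K.subtypeₗᵢ
  obtain ⟨w, b, hcw, hb⟩ := c_orthonormal.toSubtypeRange.exists_hilbertBasis_extension
  refine ⟨w, b, fun a ↦ ?_⟩
  by_cases ha : (a : H) ∈ Set.range (K.subtypeₗᵢ ∘ c)
  · obtain ⟨i, hi⟩ := ha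
    exact .inl (by rw [hb, ← hi]; exact (c i).2)
  · have inner_b_eq_zero : (innerSL 𝕜 (b a)).comp K.subtypeL = 0 := by
      refine ContinuousLinearMap.ext_on (s := Set.range c) ?_ ?_
      · exact Submodule.dense_iff_topologicalClosure_eq_top.2 c.dense_span
      · rintro _ ⟨i, rfl⟩
        let a' : w := ⟨c i, hcw ⟨i, rfl⟩⟩
        have a_ne : a ≠ a' := fun h ↦ ha ⟨i, congrArg Subtype.val h.symm⟩
        simpa [hb, a'] using b.orthonormal.2 a_ne
    exact .inr ((K.mem_orthogonal' _).2 fun k hk ↦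
      congrArg (fun L : K →L[𝕜] 𝕜 ↦ L ⟨k, hk⟩) inner_b_eq_zero)

/- The square-summable sequences `(g (y i))ᵢ` are orthogonal to the sequences `(conj (f (x i)))ᵢ`,
so a basis adapted to the orthogonal complement of the former does the job. -/
lemma exists_hilbertBasis_hasSum_zero_or_hasSum_zero [CompleteSpace E] [CompleteSpace F]
    {x : I → E} {y : I → F}
    (hx : WeaklySquareSummable 𝕜 x) (hy : WeaklySquareSummable 𝕜 y)
    (hxy : ∀ g : F →L[𝕜] 𝕜, HasSum (fun i ↦ g (y i) • x i) 0) :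
    ∃ (w : Set ℓ²(I, 𝕜)) (b : HilbertBasis w 𝕜 ℓ²(I, 𝕜)), ∀ a,
      HasSum (fun i ↦ b a i • x i) 0 ∨ HasSum (fun i ↦ conj (b a i) • y i) 0 := by
  let K : Submodule 𝕜 ℓ²(I, 𝕜) := (Submodule.span 𝕜 (Set.range hy.dualSeq))ᗮ
  have star_dualSeq_mem (f : E →L[𝕜] 𝕜) : star (hx.dualSeq f) ∈ K := by
    have ortho : Submodule.span 𝕜 {star (hx.dualSeq f)} ⟂
        Submodule.span 𝕜 (Set.range hy.dualSeq) := by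
      refine Submodule.isOrtho_span.2 ?_
      rintro _ rfl _ ⟨g, rfl⟩
      rw [hx.inner_star_dualSeq f (v := hy.dualSeq g) (hxy g), map_zero]
    exact ortho (Submodule.mem_span_singleton_self _)
  obtain ⟨w, b, hb⟩ := exists_hilbertBasis_mem_or_mem_orthogonal K
  refine ⟨w, b, fun a ↦ (hb a).symm.imp (fun b_mem ↦ ?_) fun b_mem ↦ ?_⟩
  · obtain ⟨z, hz⟩ := hx.summable_smul (b a)
    suffices z = 0 from this ▸ hz
    refine SeparatingDual.eq_zero_of_forall_dual_eq_zero (R := 𝕜) fun f ↦ ?_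
    rw [← hx.inner_star_dualSeq f hz]
    exact K.inner_right_of_mem_orthogonal (star_dualSeq_mem f) b_mem
  · obtain ⟨z, hz⟩ := hy.summable_smul (star (b a))
    suffices z = 0 from this ▸ hz
    refine SeparatingDual.eq_zero_of_forall_dual_eq_zero (R := 𝕜) fun g ↦ ?_
    rw [← hy.inner_dualSeq g hz]
    exact Submodule.inner_left_of_mem_orthogonal
      (Submodule.subset_span (Set.mem_range_self g)) b_mem

/-- The section over `t` of the family `∑ i, b a i • x i`, indexed by the vectors `b a` of a Hilbert
basis of `ℓ²(I)`. Together with `conjBasisSum` it rewrites a sum `∑ i, x i ⊗ y i` in the basis. -/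
noncomputable def basisSum {J : Type*} (b : HilbertBasis J 𝕜 ℓ²(I, 𝕜)) (t : Finset I) (x : I → E)
    (a : J) : E :=
  ∑ i ∈ t, b a i • x i

/-- The counterpart of `basisSum` for the conjugate basis vectors. -/
noncomputable def conjBasisSum {J : Type*} (b : HilbertBasis J 𝕜 ℓ²(I, 𝕜)) (t : Finset I)
    (y : I → F) (a : J) : F :=
  ∑ i ∈ t, conj (b a i) • y i

lemma hasSum_basis_mul_conj_basis [DecidableEq I] {J : Type*}
    (b : HilbertBasis J 𝕜 ℓ²(I, 𝕜)) (i j : I) :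
    HasSum (fun a ↦ b a i * conj (b a j)) (if i = j then 1 else 0) := by
  have parseval := b.hasSum_inner_mul_inner (lp.single 2 i 1) (lp.single 2 j 1)
  simpa [lp.inner_single_left, lp.inner_single_right, lp.single_apply, Pi.single_apply, eq_comm]
    using parseval

lemma hasSum_basisSum_conjBasisSum {J X : Type*} [NormedAddCommGroup X] [NormedSpace 𝕜 X]
    (b : HilbertBasis J 𝕜 ℓ²(I, 𝕜)) (τ : E →ₗ[𝕜] F →ₗ[𝕜] X) (t : Finset I) (x : I → E)
    (y : I → F) :
    HasSum (fun a ↦ τ (basisSum b t x a) (conjBasisSum b t y a))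
      (∑ i ∈ t, τ (x i) (y i)) := by
  classical
  have expand (a : J) : τ (basisSum b t x a) (conjBasisSum b t y a) =
      ∑ i ∈ t, ∑ j ∈ t, (b a i * conj (b a j)) • τ (x i) (y j) := by
    simp only [basisSum, conjBasisSum, map_sum, map_smul, LinearMap.sum_apply,
      LinearMap.smul_apply, Finset.smul_sum, mul_smul]
    rw [Finset.sum_comm]
    exact Finset.sum_congr rfl fun i _ ↦ Finset.sum_congr rfl fun j _ ↦ smul_comm _ _ _
  have diagonal : ∑ i ∈ t, τ (x i) (y i) =
      ∑ i ∈ t, ∑ j ∈ t, (if i = j then 1 else 0 : 𝕜) • τ (x i) (y j) := by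
    refine Finset.sum_congr rfl fun i hi ↦ ?_
    simp [ite_smul, hi]
  simp only [expand, diagonal]
  exact hasSum_sum fun i _ ↦ hasSum_sum fun j _ ↦
    (hasSum_basis_mul_conj_basis b i j).smul_const _

end SquareSummable

section RowNorm

open scoped lp ComplexConjugate

variable {A I J : Type*} [NonUnitalCStarAlgebra A]

/-- The operator norm of the row with entries `p i`, `i ∈ s`, namely `‖∑ pᵢ pᵢ*‖^{1/2}`. -/
noncomputable def rowNorm (s : Finset I) (p : I → A) : ℝ := √‖∑ i ∈ s, p i * star (p i)‖

/-- The operator norm of the column with entries `q i`, `i ∈ s`, namely `‖∑ qᵢ* qᵢ‖^{1/2}`. -/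
noncomputable def colNorm (s : Finset I) (q : I → A) : ℝ := √‖∑ i ∈ s, star (q i) * q i‖

lemma rowNorm_nonneg (s : Finset I) (p : I → A) : 0 ≤ rowNorm s p := Real.sqrt_nonneg _

lemma colNorm_nonneg (s : Finset I) (q : I → A) : 0 ≤ colNorm s q := Real.sqrt_nonneg _

lemma rowNorm_star (s : Finset I) (q : I → A) : rowNorm s (star q) = colNorm s q := by
  simp only [rowNorm, colNorm, Pi.star_apply, star_star]

lemma norm_sum_mul_le_rowNorm_mul_colNorm (s : Finset I) (p q : I → A) :
    ‖∑ i ∈ s, p i * q i‖ ≤ rowNorm s p * colNorm s q := by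
  let _ := CStarAlgebra.spectralOrder A
  have _ := CStarAlgebra.spectralOrderedRing A
  let P : WithCStarModule A (s → A) := (WithCStarModule.equiv A (s → A)).symm fun i ↦ p i
  let Q : WithCStarModule A (s → A) := (WithCStarModule.equiv A (s → A)).symm fun i ↦ star (q i)
  have cauchy_schwarz : ‖inner A Q P‖ ≤ ‖Q‖ * ‖P‖ := CStarModule.norm_inner_le _
  rw [mul_comm]
  simpa [P, Q, rowNorm, colNorm, WithCStarModule.pi_inner, WithCStarModule.pi_norm,
    WithCStarModule.inner_def, Finset.sum_attach s fun i ↦ p i * q i,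
    Finset.sum_attach s fun i ↦ p i * star (p i), Finset.sum_attach s fun i ↦ star (q i) * q i]
    using cauchy_schwarz

lemma colNorm_smul_const (s : Finset I) (v : I → ℂ) (y : A) :
    colNorm s (fun i ↦ v i • y) = √(∑ i ∈ s, ‖v i‖ ^ 2) * ‖y‖ := by
  have sum_eq : ∑ i ∈ s, star (v i • y) * (v i • y) =
      ((∑ i ∈ s, ‖v i‖ ^ 2 : ℝ) : ℂ) • (star y * y) := by
    push_cast
    rw [Finset.sum_smul]
    refine Finset.sum_congr rfl fun i _ ↦ ?_
    rw [star_smul, smul_mul_smul_comm, RCLike.star_def, Complex.conj_mul']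
  rw [colNorm, sum_eq, norm_smul, CStarRing.norm_star_mul_self, Complex.norm_real,
    Real.norm_of_nonneg (by positivity), Real.sqrt_mul (by positivity),
    Real.sqrt_mul_self (norm_nonneg y)]

lemma norm_sum_smul_le_rowNorm (s : Finset I) (p : I → A) (v : I → ℂ) :
    ‖∑ i ∈ s, v i • p i‖ ≤ rowNorm s p * √(∑ i ∈ s, ‖v i‖ ^ 2) := by
  set y := ∑ i ∈ s, v i • p i with hy
  have sq_le : ‖y‖ * ‖y‖ ≤ rowNorm s p * √(∑ i ∈ s, ‖v i‖ ^ 2) * ‖y‖ := by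
    calc ‖y‖ * ‖y‖ = ‖∑ i ∈ s, p i * (v i • star y)‖ := by
          rw [← CStarRing.norm_self_mul_star, hy, Finset.sum_mul, ← hy]
          simp only [smul_mul_assoc, mul_smul_comm]
      _ ≤ rowNorm s p * colNorm s (fun i ↦ v i • star y) :=
          norm_sum_mul_le_rowNorm_mul_colNorm s _ _
      _ = rowNorm s p * √(∑ i ∈ s, ‖v i‖ ^ 2) * ‖y‖ := by
          rw [colNorm_smul_const, norm_star, mul_assoc]
  rcases (norm_nonneg y).eq_or_lt with y_zero | y_pos
  · exact y_zero.symm.trans_le (mul_nonneg (rowNorm_nonneg s p) (Real.sqrt_nonneg _))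
  · exact le_of_mul_le_mul_right sq_le y_pos

lemma norm_sum_smul_le_colNorm (s : Finset I) (q : I → A) (v : I → ℂ) :
    ‖∑ i ∈ s, v i • q i‖ ≤ colNorm s q * √(∑ i ∈ s, ‖v i‖ ^ 2) := by
  calc ‖∑ i ∈ s, v i • q i‖ = ‖∑ i ∈ s, star v i • star q i‖ := by
        rw [← norm_star, star_sum]
        simp only [star_smul, Pi.star_apply]
    _ ≤ rowNorm s (star q) * √(∑ i ∈ s, ‖star v i‖ ^ 2) := norm_sum_smul_le_rowNorm s _ _
    _ = colNorm s q * √(∑ i ∈ s, ‖v i‖ ^ 2) := by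
        simp only [rowNorm_star, Pi.star_apply, norm_star]

lemma rowNorm_le_sqrt_norm_of_hasSum {p : I → A} {x : A}
    (hp : HasSum (fun i ↦ p i * star (p i)) x) (s : Finset I) : rowNorm s p ≤ √‖x‖ := by
  let _ := CStarAlgebra.spectralOrder A
  have _ := CStarAlgebra.spectralOrderedRing A
  exact Real.sqrt_le_sqrt <| CStarAlgebra.norm_le_norm_of_nonneg_of_le
    (Finset.sum_nonneg fun i _ ↦ mul_star_self_nonneg _)
    (sum_le_hasSum s (fun i _ ↦ mul_star_self_nonneg _) hp)

lemma rowNorm_basisSum_le (b : HilbertBasis J ℂ ℓ²(I, ℂ)) (s : Finset J) (t : Finset I)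
    (p : I → A) : rowNorm s (basisSum b t p) ≤ rowNorm t p := by
  have star_basisSum (a : J) : star (basisSum b t p a) = conjBasisSum b t (star p) a := by
    simp only [basisSum, conjBasisSum, star_sum, star_smul, Pi.star_apply, RCLike.star_def]
  refine rowNorm_le_sqrt_norm_of_hasSum ?_ s
  simp only [star_basisSum]
  exact hasSum_basisSum_conjBasisSum b (LinearMap.mul ℂ A) t p (star p)

lemma colNorm_conjBasisSum_le (b : HilbertBasis J ℂ ℓ²(I, ℂ)) (s : Finset J) (t : Finset I)
    (q : I → A) : colNorm s (conjBasisSum b t q) ≤ colNorm t q := by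
  have star_conjBasisSum : star (conjBasisSum b t q) = basisSum b t (star q) := by
    ext a
    simp [basisSum, conjBasisSum, star_sum, star_smul]
  simpa only [← rowNorm_star, star_conjBasisSum] using rowNorm_basisSum_le b s t (star q)

lemma exists_forall_rowNorm_le {p : I → A} (hp : Summable fun i ↦ p i * star (p i)) :
    ∃ M : ℝ, 0 ≤ M ∧ ∀ s, rowNorm s p ≤ M :=
  ⟨_, Real.sqrt_nonneg _, rowNorm_le_sqrt_norm_of_hasSum hp.hasSum⟩

lemma exists_forall_colNorm_le {q : I → A} (hq : Summable fun i ↦ star (q i) * q i) :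
    ∃ M : ℝ, 0 ≤ M ∧ ∀ s, colNorm s q ≤ M := by
  simpa only [rowNorm_star] using exists_forall_rowNorm_le (p := star q) (by simpa using hq)

lemma exists_forall_disjoint_rowNorm_lt {p : I → A} (hp : Summable fun i ↦ p i * star (p i))
    {ε : ℝ} (hε : 0 < ε) : ∃ t, ∀ s, Disjoint s t → rowNorm s p < ε := by
  obtain ⟨t, ht⟩ := summable_iff_vanishing_norm.1 hp (ε ^ 2) (by positivity)
  exact ⟨t, fun s hs ↦ (Real.sqrt_lt' hε).2 (ht s hs)⟩

lemma exists_forall_disjoint_colNorm_lt {q : I → A} (hq : Summable fun i ↦ star (q i) * q i)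
    {ε : ℝ} (hε : 0 < ε) : ∃ t, ∀ s, Disjoint s t → colNorm s q < ε := by
  simpa only [rowNorm_star] using
    exists_forall_disjoint_rowNorm_lt (p := star q) (by simpa using hq) hε

lemma weaklySquareSummable_of_summable_mul_star {p : I → A}
    (hp : Summable fun i ↦ p i * star (p i)) : WeaklySquareSummable ℂ p := by
  obtain ⟨M, hM, hp⟩ := exists_forall_rowNorm_le hp
  exact ⟨M, hM, fun s v ↦ (norm_sum_smul_le_rowNorm s p v).trans (by gcongr; exact hp s)⟩

lemma weaklySquareSummable_of_summable_star_mul {q : I → A}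
    (hq : Summable fun i ↦ star (q i) * q i) : WeaklySquareSummable ℂ q := by
  obtain ⟨M, hM, hq⟩ := exists_forall_colNorm_le hq
  exact ⟨M, hM, fun s v ↦ (norm_sum_smul_le_colNorm s q v).trans (by gcongr; exact hq s)⟩

end RowNorm

section HaagerupTensorProduct

open Filter Topology
open scoped lp ComplexConjugate

variable {A I J X : Type*} [NonUnitalCStarAlgebra A] [NormedAddCommGroup X] [NormedSpace ℂ X]

lemma haagerupNorm_sum_tmul_le (s : Finset I) (p q : I → A) :
    haagerupNorm A (∑ i ∈ s, p i ⊗ₜ[ℂ] q i) ≤ rowNorm s p * colNorm s q := by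
  have sum_equivFin {M : Type _} [AddCommMonoid M] (f : I → M) :
      ∑ i ∈ s, f i = ∑ k : Fin s.card, f (s.equivFin.symm k) := by
    rw [← Finset.sum_coe_sort s, ← s.equivFin.symm.sum_comp fun i : s ↦ f i]
  refine csInf_le ⟨0, ?_⟩ ⟨s.card, fun k ↦ p (s.equivFin.symm k),
    fun k ↦ q (s.equivFin.symm k), ?_, ?_⟩
  · rintro c ⟨n, p, q, -, rfl⟩
    positivity
  · exact sum_equivFin fun i ↦ p i ⊗ₜ[ℂ] q i
  · rw [rowNorm, colNorm, sum_equivFin fun i ↦ p i * star (p i),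
      sum_equivFin fun i ↦ star (q i) * q i]

lemma norm_sum_map_tmul_le {ι : A ⊗[ℂ] A →ₗ[ℂ] X} (hι : ∀ y, ‖ι y‖ ≤ haagerupNorm A y)
    (s : Finset I) (p q : I → A) :
    ‖∑ i ∈ s, ι (p i ⊗ₜ[ℂ] q i)‖ ≤ rowNorm s p * colNorm s q := by
  rw [← map_sum]
  exact (hι _).trans (haagerupNorm_sum_tmul_le s p q)

lemma haagerupNorm_tmul_le (a b : A) : haagerupNorm A (a ⊗ₜ[ℂ] b) ≤ ‖a‖ * ‖b‖ := by
  simpa [rowNorm, colNorm, CStarRing.norm_self_mul_star, CStarRing.norm_star_mul_self] using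
    haagerupNorm_sum_tmul_le {()} (fun _ ↦ a) (fun _ ↦ b)

section Series

lemma rowNorm_smul (c : ℂ) (s : Finset I) (p : I → A) :
    rowNorm s (c • p) = ‖c‖ * rowNorm s p := by
  have sum_eq : ∑ i ∈ s, (c • p) i * star ((c • p) i) =
      (c * star c) • ∑ i ∈ s, p i * star (p i) := by
    simp only [Pi.smul_apply, star_smul, smul_mul_smul_comm, Finset.smul_sum]
  rw [rowNorm, sum_eq, norm_smul, norm_mul, norm_star, Real.sqrt_mul (by positivity),
    Real.sqrt_mul_self (norm_nonneg c), rowNorm]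

lemma colNorm_smul (c : ℂ) (s : Finset I) (q : I → A) :
    colNorm s (c • q) = ‖c‖ * colNorm s q := by
  rw [← rowNorm_star, star_smul, rowNorm_smul, norm_star, rowNorm_star]

lemma exists_pos_mul_le_and_inv_mul_le {P Q r : ℝ} (hP : 0 ≤ P) (hQ : 0 ≤ Q) (hr : 0 < r)
    (hPQ : P * Q ≤ r * r) : ∃ c : ℝ, 0 < c ∧ c * P ≤ r ∧ c⁻¹ * Q ≤ r := by
  rcases hP.eq_or_lt with rfl | P_pos
  · refine ⟨(Q + 1) / r, by positivity, by simpa using hr.le, ?_⟩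
    rw [inv_div, div_mul_eq_mul_div, div_le_iff₀ (by positivity)]
    gcongr
    linarith
  · refine ⟨r / P, by positivity, by rw [div_mul_cancel₀ r P_pos.ne'], ?_⟩
    rwa [inv_div, div_mul_eq_mul_div, div_le_iff₀ hr]

lemma exists_eq_sum_tmul_of_haagerupNorm_lt {x : A ⊗[ℂ] A} {ε : ℝ} (hε : 0 < ε)
    (hx : haagerupNorm A x < ε) : ∃ (n : ℕ) (p q : Fin n → A), x = ∑ i, p i ⊗ₜ[ℂ] q i ∧
      rowNorm Finset.univ p ≤ √ε ∧ colNorm Finset.univ q ≤ √ε := by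
  obtain ⟨n₀, p₀, q₀, hx₀⟩ := TensorProduct.exists_sum_tmul_eq x
  rw [haagerupNorm] at hx
  obtain ⟨-, ⟨n, p, q, hpq, rfl⟩, lt_ε⟩ :=
    exists_lt_of_csInf_lt (by exact ⟨_, n₀, p₀, q₀, hx₀, rfl⟩) hx
  obtain ⟨c, c_pos, hcp, hcq⟩ := exists_pos_mul_le_and_inv_mul_le
    (rowNorm_nonneg Finset.univ p) (colNorm_nonneg Finset.univ q) (Real.sqrt_pos.2 hε)
    (lt_ε.le.trans_eq (Real.mul_self_sqrt hε.le).symm)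
  refine ⟨n, (c : ℂ) • p, (c : ℂ)⁻¹ • q, ?_, ?_, ?_⟩
  · have c_ne : (c : ℂ) ≠ 0 := by exact_mod_cast c_pos.ne'
    simp only [hpq, Pi.smul_apply, TensorProduct.smul_tmul_smul, mul_inv_cancel₀ c_ne, one_smul]
  · rwa [rowNorm_smul, Complex.norm_real, Real.norm_of_nonneg c_pos.le]
  · rwa [colNorm_smul, norm_inv, Complex.norm_real, Real.norm_of_nonneg c_pos.le]

lemma norm_sum_mul_star_le_of_subset {s t : Finset I} (hst : s ⊆ t) (p : I → A) :
    ‖∑ i ∈ s, p i * star (p i)‖ ≤ ‖∑ i ∈ t, p i * star (p i)‖ := by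
  let _ := CStarAlgebra.spectralOrder A
  have _ := CStarAlgebra.spectralOrderedRing A
  exact CStarAlgebra.norm_le_norm_of_nonneg_of_le
    (Finset.sum_nonneg fun i _ ↦ mul_star_self_nonneg _)
    (Finset.sum_le_sum_of_subset_of_nonneg hst fun i _ _ ↦ mul_star_self_nonneg _)

lemma summable_mul_star_sigma {K : Type*} {ν : K → Type*} [∀ k, Fintype (ν k)]
    {p : (k : K) → ν k → A} {δ : K → ℝ} (hδ : Summable δ)
    (hp : ∀ k, ‖∑ i, p k i * star (p k i)‖ ≤ δ k) :
    Summable fun i : Σ k, ν k ↦ p i.1 i.2 * star (p i.1 i.2) := by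
  classical
  refine summable_iff_vanishing_norm.2 fun ε hε ↦ ?_
  obtain ⟨t, ht⟩ := summable_iff_vanishing_norm.1 hδ ε hε
  refine ⟨t.sigma fun _ ↦ Finset.univ, fun s hs ↦ ?_⟩
  set u := s.image Sigma.fst with hu
  have s_subset : s ⊆ u.sigma fun _ ↦ Finset.univ := fun i hi ↦
    Finset.mem_sigma.2 ⟨Finset.mem_image_of_mem _ hi, Finset.mem_univ _⟩
  have u_disjoint : Disjoint u t := by
    rw [Finset.disjoint_left] at hs ⊢
    intro k hk k_mem
    obtain ⟨i, hi, rfl⟩ := Finset.mem_image.1 hk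
    exact hs hi (Finset.mem_sigma.2 ⟨k_mem, Finset.mem_univ _⟩)
  calc ‖∑ i ∈ s, p i.1 i.2 * star (p i.1 i.2)‖
      ≤ ‖∑ i ∈ u.sigma fun _ ↦ Finset.univ, p i.1 i.2 * star (p i.1 i.2)‖ :=
        norm_sum_mul_star_le_of_subset s_subset fun i ↦ p i.1 i.2
    _ = ‖∑ k ∈ u, ∑ i, p k i * star (p k i)‖ := by rw [Finset.sum_sigma]
    _ ≤ ∑ k ∈ u, δ k := norm_sum_le_of_le _ fun k _ ↦ hp k
    _ ≤ ‖∑ k ∈ u, δ k‖ := le_abs_self _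
    _ < ε := ht u u_disjoint

lemma summable_star_mul_sigma {K : Type*} {ν : K → Type*} [∀ k, Fintype (ν k)]
    {q : (k : K) → ν k → A} {δ : K → ℝ} (hδ : Summable δ)
    (hq : ∀ k, ‖∑ i, star (q k i) * q k i‖ ≤ δ k) :
    Summable fun i : Σ k, ν k ↦ star (q i.1 i.2) * q i.1 i.2 := by
  simpa using summable_mul_star_sigma (p := fun k i ↦ star (q k i)) hδ (by simpa using hq)

lemma summable_map_tmul [CompleteSpace X] {ι : A ⊗[ℂ] A →ₗ[ℂ] X}
    (hι : ∀ y, ‖ι y‖ ≤ haagerupNorm A y) {p q : I → A}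
    (hp : Summable fun i ↦ p i * star (p i)) (hq : Summable fun i ↦ star (q i) * q i) :
    Summable fun i ↦ ι (p i ⊗ₜ[ℂ] q i) := by
  classical
  refine summable_iff_vanishing_norm.2 fun ε hε ↦ ?_
  obtain ⟨t₁, ht₁⟩ := exists_forall_disjoint_rowNorm_lt hp (Real.sqrt_pos.2 hε)
  obtain ⟨t₂, ht₂⟩ := exists_forall_disjoint_colNorm_lt hq (Real.sqrt_pos.2 hε)
  refine ⟨t₁ ∪ t₂, fun s hs ↦ ?_⟩
  rw [Finset.disjoint_union_right] at hs
  calc ‖∑ i ∈ s, ι (p i ⊗ₜ[ℂ] q i)‖ ≤ rowNorm s p * colNorm s q :=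
        norm_sum_map_tmul_le hι s p q
    _ < √ε * √ε := mul_lt_mul'' (ht₁ s hs.1) (ht₂ s hs.2) (rowNorm_nonneg s p)
        (colNorm_nonneg s q)
    _ = ε := Real.mul_self_sqrt hε.le

lemma exists_summable_norm_hasSum_of_denseRange {E F : Type*} [AddGroup E]
    [NormedAddCommGroup F] {f : E →+ F} (hf : DenseRange f) (z : F) :
    ∃ u : ℕ → E, (Summable fun k ↦ ‖f (u k)‖) ∧ HasSum (fun k ↦ f (u k)) z := by
  obtain ⟨v, tendsto_v, v_mem, -, v_lt⟩ :=
    controlled_sum_of_mem_closure (s := f.range) (hf z) (b := fun k ↦ (1 / 2 : ℝ) ^ k)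
      fun k ↦ by positivity
  choose u hu using fun k ↦ AddMonoidHom.mem_range.1 (v_mem k)
  have summable_v : Summable fun k ↦ ‖v k‖ := by
    refine (summable_nat_add_iff 1).1 (Summable.of_nonneg_of_le (fun _ ↦ norm_nonneg _)
      (fun k ↦ (v_lt (k + 1) k.succ_pos).le) ?_)
    exact (summable_nat_add_iff 1).2 summable_geometric_two
  refine ⟨u, by simpa only [hu] using summable_v, ?_⟩
  simp only [hu]
  exact hasSum_of_subseq_of_summable summable_v
    (Filter.tendsto_finset_range.comp (Filter.tendsto_add_atTop_nat 1)) tendsto_v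

lemma exists_hasSum_map_tmul [CompleteSpace X] {ι : A ⊗[ℂ] A →ₗ[ℂ] X}
    (hι : ∀ y, ‖ι y‖ = haagerupNorm A y) (hι_dense : DenseRange ι) (z : X) :
    ∃ (n : ℕ → ℕ) (p q : (Σ k, Fin (n k)) → A), (Summable fun i ↦ p i * star (p i)) ∧
      (Summable fun i ↦ star (q i) * q i) ∧ HasSum (fun i ↦ ι (p i ⊗ₜ[ℂ] q i)) z := by
  obtain ⟨u, summable_u, hasSum_u⟩ :=
    exists_summable_norm_hasSum_of_denseRange (f := ι.toAddMonoidHom) hι_dense z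
  let δ (k : ℕ) : ℝ := ‖ι (u k)‖ + (1 / 2) ^ k
  have summable_δ : Summable δ := summable_u.add summable_geometric_two
  have δ_pos (k : ℕ) : 0 < δ k := by positivity
  have u_lt (k : ℕ) : haagerupNorm A (u k) < δ k := by
    rw [← hι]
    exact lt_add_of_pos_right _ (by positivity)
  choose n p q hpq hp hq using fun k ↦ exists_eq_sum_tmul_of_haagerupNorm_lt (δ_pos k) (u_lt k)
  have hp := summable_mul_star_sigma summable_δ fun k ↦
    (Real.sqrt_le_sqrt_iff (δ_pos k).le).1 (hp k)
  have hq := summable_star_mul_sigma summable_δ fun k ↦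
    (Real.sqrt_le_sqrt_iff (δ_pos k).le).1 (hq k)
  obtain ⟨z', hz'⟩ := summable_map_tmul (fun y ↦ (hι y).le) hp hq
  have hasSum_u' : HasSum (fun k ↦ ι (u k)) z' := hz'.sigma fun k ↦ by
    rw [hpq k, map_sum]
    exact hasSum_fintype _
  exact ⟨n, fun i ↦ p i.1 i.2, fun i ↦ q i.1 i.2, hp, hq, hasSum_u.unique hasSum_u' ▸ hz'⟩

end Series

section Separation

variable {ι : A ⊗[ℂ] A →ₗ[ℂ] X} {b : HilbertBasis J ℂ ℓ²(I, ℂ)} {p q : I → A}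

lemma norm_sum_map_basisSum_tmul_sub_le [DecidableEq I] (hι : ∀ y, ‖ι y‖ ≤ haagerupNorm A y)
    (s : Finset J) {t₀ t : Finset I} (ht : t₀ ⊆ t) :
    ‖∑ a ∈ s, ι (basisSum b t p a ⊗ₜ[ℂ] conjBasisSum b t q a) -
        ∑ a ∈ s, ι (basisSum b t₀ p a ⊗ₜ[ℂ] conjBasisSum b t₀ q a)‖ ≤
      rowNorm (t \ t₀) p * colNorm t q + rowNorm t₀ p * colNorm (t \ t₀) q := by
  have split (a : J) : ι (basisSum b t p a ⊗ₜ[ℂ] conjBasisSum b t q a) =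
      ι (basisSum b (t \ t₀) p a ⊗ₜ[ℂ] conjBasisSum b t q a) +
      ι (basisSum b t₀ p a ⊗ₜ[ℂ] conjBasisSum b (t \ t₀) q a) +
      ι (basisSum b t₀ p a ⊗ₜ[ℂ] conjBasisSum b t₀ q a) := by
    have row_split : basisSum b t p a = basisSum b (t \ t₀) p a + basisSum b t₀ p a :=
      (Finset.sum_sdiff ht).symm
    have col_split : conjBasisSum b t q a =
        conjBasisSum b (t \ t₀) q a + conjBasisSum b t₀ q a := (Finset.sum_sdiff ht).symm
    rw [row_split, TensorProduct.add_tmul, map_add, add_assoc, add_right_inj, ← map_add,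
      ← TensorProduct.tmul_add, ← col_split]
  simp only [split, Finset.sum_add_distrib, add_sub_cancel_right]
  refine (norm_add_le _ _).trans (add_le_add ?_ ?_) <;>
    refine (norm_sum_map_tmul_le hι s _ _).trans (mul_le_mul ?_ ?_ ?_ ?_) <;>
    simp only [rowNorm_basisSum_le, colNorm_conjBasisSum_le, rowNorm_nonneg, colNorm_nonneg]

lemma tendsto_map_basisSum_tmul_zero (hι : ∀ y, ‖ι y‖ ≤ haagerupNorm A y)
    (hp : WeaklySquareSummable ℂ p) (hq : WeaklySquareSummable ℂ q) {a : J}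
    (hpq : HasSum (fun i ↦ b a i • p i) 0 ∨ HasSum (fun i ↦ conj (b a i) • q i) 0) :
    Tendsto (fun t ↦ ι (basisSum b t p a ⊗ₜ[ℂ] conjBasisSum b t q a)) atTop (𝓝 0) := by
  obtain ⟨x, hx⟩ : ∃ x, Tendsto (fun t ↦ basisSum b t p a) atTop (𝓝 x) := hp.summable_smul (b a)
  obtain ⟨y, hy⟩ : ∃ y, Tendsto (fun t ↦ conjBasisSum b t q a) atTop (𝓝 y) :=
    hq.summable_smul (star (b a))
  have norm_mul_norm_eq_zero : ‖x‖ * ‖y‖ = 0 := by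
    rcases hpq with hx₀ | hy₀
    · rw [tendsto_nhds_unique hx hx₀, norm_zero, zero_mul]
    · rw [tendsto_nhds_unique hy hy₀, norm_zero, mul_zero]
  refine squeeze_zero_norm (fun t ↦ (hι _).trans (haagerupNorm_tmul_le _ _)) ?_
  exact norm_mul_norm_eq_zero ▸ hx.norm.mul hy.norm

lemma norm_sum_map_tmul_le_of_tail (hι : ∀ y, ‖ι y‖ ≤ haagerupNorm A y)
    (hpq : ∀ a, Tendsto (fun t ↦ ι (basisSum b t p a ⊗ₜ[ℂ] conjBasisSum b t q a)) atTop (𝓝 0))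
    {P Q η : ℝ} (hP : ∀ t, rowNorm t p ≤ P) (hQ : ∀ t, colNorm t q ≤ Q) {t₀ : Finset I}
    (hp_tail : ∀ t, Disjoint t t₀ → rowNorm t p ≤ η)
    (hq_tail : ∀ t, Disjoint t t₀ → colNorm t q ≤ η) :
    ‖∑ i ∈ t₀, ι (p i ⊗ₜ[ℂ] q i)‖ ≤ η * Q + P * η := by
  classical
  let w (s : Finset J) (t : Finset I) : X :=
    ∑ a ∈ s, ι (basisSum b t p a ⊗ₜ[ℂ] conjBasisSum b t q a)
  have w_sub_le (s : Finset J) (t : Finset I) (ht : t₀ ⊆ t) :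
      ‖w s t - w s t₀‖ ≤ η * Q + P * η := by
    refine (norm_sum_map_basisSum_tmul_sub_le hι s ht).trans ?_
    have P_nonneg : 0 ≤ P := (rowNorm_nonneg t₀ p).trans (hP t₀)
    have η_nonneg : 0 ≤ η := (rowNorm_nonneg _ p).trans (hp_tail ∅ (Finset.disjoint_empty_left _))
    have tail_disjoint : Disjoint (t \ t₀) t₀ := Finset.sdiff_disjoint
    gcongr
    exacts [colNorm_nonneg _ _, hp_tail _ tail_disjoint, hQ t, colNorm_nonneg _ _, hP t₀,
      hq_tail _ tail_disjoint]
  have w_le (s : Finset J) : ‖w s t₀‖ ≤ η * Q + P * η := by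
    have w_tendsto : Tendsto (w s) atTop (𝓝 0) := by
      simpa using tendsto_finsetSum s fun a _ ↦ hpq a
    have norm_tendsto : Tendsto (fun t ↦ ‖w s t - w s t₀‖) atTop (𝓝 ‖w s t₀‖) := by
      simpa using (w_tendsto.sub_const (w s t₀)).norm
    exact le_of_tendsto norm_tendsto ((eventually_ge_atTop t₀).mono (w_sub_le s))
  have parseval : Tendsto (fun s ↦ w s t₀) atTop (𝓝 (∑ i ∈ t₀, ι (p i ⊗ₜ[ℂ] q i))) :=
    hasSum_basisSum_conjBasisSum b ((TensorProduct.mk ℂ A A).compr₂ ι) t₀ p q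
  exact le_of_tendsto' parseval.norm w_le

theorem eq_zero_of_forall_hasSum_slice_zero (hι : ∀ y, ‖ι y‖ ≤ haagerupNorm A y)
    (hp : Summable fun i ↦ p i * star (p i)) (hq : Summable fun i ↦ star (q i) * q i)
    {z : X} (hz : HasSum (fun i ↦ ι (p i ⊗ₜ[ℂ] q i)) z)
    (hslice : ∀ g : A →L[ℂ] ℂ, HasSum (fun i ↦ g (q i) • p i) 0) : z = 0 := by
  classical
  have wp := weaklySquareSummable_of_summable_mul_star hp
  have wq := weaklySquareSummable_of_summable_star_mul hq
  obtain ⟨w, b, hb⟩ := exists_hilbertBasis_hasSum_zero_or_hasSum_zero wp wq hslice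
  have hpq (a : w) := tendsto_map_basisSum_tmul_zero hι wp wq (hb a)
  obtain ⟨P, P_nonneg, hP⟩ := exists_forall_rowNorm_le hp
  obtain ⟨Q, Q_nonneg, hQ⟩ := exists_forall_colNorm_le hq
  refine norm_le_zero_iff.1 (le_of_forall_pos_le_add fun ε hε ↦ ?_)
  set η := ε / (P + Q + 1) with hη
  have η_pos : 0 < η := by positivity
  obtain ⟨t₁, ht₁⟩ := exists_forall_disjoint_rowNorm_lt hp η_pos
  obtain ⟨t₂, ht₂⟩ := exists_forall_disjoint_colNorm_lt hq η_pos
  have partial_sum_le (t : Finset I) (ht : t₁ ∪ t₂ ⊆ t) :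
      ‖∑ i ∈ t, ι (p i ⊗ₜ[ℂ] q i)‖ ≤ η * Q + P * η :=
    norm_sum_map_tmul_le_of_tail hι hpq hP hQ
      (fun s hs ↦ (ht₁ s (hs.mono_right (Finset.union_subset_left ht))).le)
      (fun s hs ↦ (ht₂ s (hs.mono_right (Finset.union_subset_right ht))).le)
  calc ‖z‖ ≤ η * Q + P * η :=
        le_of_tendsto (Tendsto.norm hz) ((eventually_ge_atTop _).mono partial_sum_le)
    _ ≤ η * (P + Q + 1) := by linarith
    _ = 0 + ε := by rw [hη, div_mul_cancel₀ ε (by positivity), zero_add]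

end Separation

end HaagerupTensorProduct

lemma sum_tmul_eq_zero_of_forall_slice_eq_zero {𝕜 E F I : Type*} [Field 𝕜] [TopologicalSpace 𝕜]
    [AddCommGroup E] [Module 𝕜 E] [AddCommGroup F] [TopologicalSpace F] [Module 𝕜 F]
    [SeparatingDual 𝕜 F] {s : Finset I} {x : I → E} {y : I → F}
    (hxy : ∀ g : F →L[𝕜] 𝕜, ∑ i ∈ s, g (y i) • x i = 0) : ∑ i ∈ s, x i ⊗ₜ[𝕜] y i = 0 := by
  classical
  let c := Module.Basis.ofVectorSpace 𝕜 E
  refine (TensorProduct.equivFinsuppOfBasisLeft c).map_eq_zero_iff.1 ?_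
  ext k
  refine SeparatingDual.eq_zero_of_forall_dual_eq_zero (R := 𝕜) fun g ↦ ?_
  simpa [mul_comm] using congrArg (c.coord k) (hxy g)

section InvariantFunctional

variable {A D : Type*} [NormedRing A] [NormedAlgebra ℂ A] [NormedRing D] [NormedAlgebra ℂ D]
  {e φ : A →ₐ[ℂ] D} {h : A →L[ℂ] ℂ} {S : D →L[ℂ] A}

lemma slice_mul_map {e₁ : A → D} {j : A ⊗[ℂ] A →ₗ[ℂ] D} (hj : ∀ a b, j (a ⊗ₜ[ℂ] b) = e₁ a * e b)
    (hjdense : DenseRange j) (hS : ∀ a b, S (j (a ⊗ₜ[ℂ] b)) = h a • b) (d : D) (b : A) :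
    S (d * e b) = S d * b := by
  refine hjdense.induction_on (p := fun d ↦ S (d * e b) = S d * b) d
    (isClosed_eq (by fun_prop) (by fun_prop)) fun x ↦ ?_
  induction x with
  | zero => simp
  | add x y hx hy => simp only [map_add, add_mul, hx, hy]
  | tmul a c => rw [hj, mul_assoc, ← map_mul, ← hj, ← hj, hS, hS, smul_mul_assoc]

lemma eq_zero_of_hasSum_slice [StarRing A]
    (hfaithful : ∀ a, h (star a * a) = 0 → a = 0)
    (hS : ∀ a b, S (φ a * e b) = h a • b) {I : Type*} {p q : I → A}
    (hpq : HasSum (fun i ↦ φ (p i) * e (q i)) 0) {g : A →L[ℂ] ℂ} {y : A}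
    (hy : HasSum (fun i ↦ g (q i) • p i) y) : y = 0 := by
  refine hfaithful y ?_
  have h_sum : HasSum (fun i ↦ g (q i) * h (star y * p i)) (h (star y * y)) := by
    simpa using (hy.mul_left (star y)).mapL h
  have g_sum : HasSum (fun i ↦ g (S (φ (star y) * (φ (p i) * e (q i))))) 0 := by
    simpa using ((hpq.mul_left (φ (star y))).mapL S).mapL g
  refine h_sum.unique ?_
  simpa only [← mul_assoc, ← map_mul, hS, map_smul, smul_eq_mul, mul_comm] using g_sum

end InvariantFunctional

theorem T1_injective_of_faithful_invariant_state_general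
    {A D : Type*} [CStarAlgebra A] [NormedRing D] [NormedAlgebra ℂ D]
    (e₁ e₂ : A →ₐ[ℂ] D)
    (j : A ⊗[ℂ] A →ₗ[ℂ] D) (hj : ∀ a b : A, j (a ⊗ₜ[ℂ] b) = e₁ a * e₂ b)
    (hjdense : DenseRange j)
    (h : A →L[ℂ] ℂ) (hfaithful : ∀ a : A, h (star a * a) = 0 → a = 0)
    (S : D →L[ℂ] A) (hS : ∀ a b : A, S (j (a ⊗ₜ[ℂ] b)) = h a • b)
    (φ : A →ₐ[ℂ] D) (hinv : ∀ a : A, S (φ a) = h a • 1)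
    {X : Type*} [NormedAddCommGroup X] [NormedSpace ℂ X] [CompleteSpace X]
    (ιh : A ⊗[ℂ] A →ₗ[ℂ] X)
    (hiso : ∀ y : A ⊗[ℂ] A, ‖ιh y‖ = haagerupNorm A y)
    (hdense : DenseRange ιh)
    (T₁ : X →L[ℂ] D)
    (hT₁ : ∀ a b : A, T₁ (ιh (a ⊗ₜ[ℂ] b)) = φ a * e₂ b) :
    Function.Injective T₁ ∧ ∀ x : A ⊗[ℂ] A, T₁ (ιh x) = 0 → x = 0 := by
  have slice_T₁ (a b : A) : S (φ a * e₂ b) = h a • b := by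
    rw [slice_mul_map hj hjdense hS, hinv, smul_mul_assoc, one_mul]
  refine ⟨(injective_iff_map_eq_zero T₁).2 fun z hz ↦ ?_, fun x hx ↦ ?_⟩
  · obtain ⟨n, p, q, hp, hq, hasSum_z⟩ := exists_hasSum_map_tmul hiso hdense z
    have hasSum_T₁ : HasSum (fun i ↦ φ (p i) * e₂ (q i)) 0 := by
      simpa only [hT₁, hz] using hasSum_z.mapL T₁
    refine eq_zero_of_forall_hasSum_slice_zero (fun y ↦ (hiso y).le) hp hq hasSum_z fun g ↦ ?_
    obtain ⟨y, hy⟩ := (weaklySquareSummable_of_summable_mul_star hp).summable_smul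
      ((weaklySquareSummable_of_summable_star_mul hq).dualSeq g)
    exact eq_zero_of_hasSum_slice hfaithful slice_T₁ hasSum_T₁ hy ▸ hy
  · obtain ⟨n, p, q, rfl⟩ := TensorProduct.exists_sum_tmul_eq x
    have hasSum_T₁ : HasSum (fun i ↦ φ (p i) * e₂ (q i)) 0 := by
      simp only [map_sum, hT₁] at hx
      exact hx ▸ hasSum_fintype _
    exact sum_tmul_eq_zero_of_forall_slice_eq_zero fun g ↦
      eq_zero_of_hasSum_slice hfaithful slice_T₁ hasSum_T₁ (hasSum_fintype _)

/-- Let `A` be a unital C*-algebra with a comultiplication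
`φ : A → A ⊗ A` into the minimal C*-tensor product, and let `h` be a faithful state on
`A` which is both left and right invariant: `(ι ⊗ h)φ(a) = h(a)1` and
`(h ⊗ ι)φ(a) = h(a)1`.  Then the extension `T₁ : A ⊗_h A → A ⊗ A` of
`a ⊗ b ↦ φ(a)(1 ⊗ b)` is injective; in particular if `x ∈ A ⊙ A` and `T₁(x) = 0` then
`x = 0`.  The minimal C*-tensor product is modelled by a unital C*-algebra `D` with
commuting unital embeddings `e₁, e₂`, the induced map `j` on `A ⊙ A` with dense range,
slice maps `S₁ ω = ω ⊗ ι` and `S₂ ω = ι ⊗ ω` which separate the points of `D`; the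
Haagerup tensor product `A ⊗_h A` is modelled by an abstract completion `X` of `A ⊙ A`
for the Haagerup norm. -/
theorem T1_injective_of_faithful_invariant_state
    {A D : Type*}
    [NormedRing A] [StarRing A] [CStarRing A] [CompleteSpace A]
    [NormedAlgebra ℂ A] [StarModule ℂ A]
    [NormedRing D] [StarRing D] [CStarRing D] [CompleteSpace D]
    [NormedAlgebra ℂ D] [StarModule ℂ D]
    (e₁ e₂ : A →⋆ₐ[ℂ] D)
    (hcomm : ∀ a b : A, Commute (e₁ a) (e₂ b))
    (j : A ⊗[ℂ] A →ₗ[ℂ] D) (hj : ∀ a b : A, j (a ⊗ₜ[ℂ] b) = e₁ a * e₂ b)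
    (hjdense : DenseRange j)
    (S₁ S₂ : (A →L[ℂ] ℂ) → D →L[ℂ] A)
    (hS₁ : ∀ (ω : A →L[ℂ] ℂ) (a b : A), S₁ ω (j (a ⊗ₜ[ℂ] b)) = ω a • b)
    (hS₂ : ∀ (ω : A →L[ℂ] ℂ) (a b : A), S₂ ω (j (a ⊗ₜ[ℂ] b)) = ω b • a)
    (hsep : ∀ d : D, (∀ ω : A →L[ℂ] ℂ, S₂ ω d = 0) → d = 0)
    (φ : A →⋆ₐ[ℂ] D)
    (h : A →L[ℂ] ℂ) (hone : h 1 = 1)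
    (hpos : ∀ a : A, 0 ≤ h (star a * a))
    (hfaithful : ∀ a : A, h (star a * a) = 0 → a = 0)
    (hleftinv : ∀ a : A, S₂ h (φ a) = h a • 1)
    (hrightinv : ∀ a : A, S₁ h (φ a) = h a • 1)
    {X : Type*} [NormedAddCommGroup X] [NormedSpace ℂ X] [CompleteSpace X]
    (ιh : A ⊗[ℂ] A →ₗ[ℂ] X)
    (hiso : ∀ y : A ⊗[ℂ] A, ‖ιh y‖ = haagerupNorm A y)
    (hdense : DenseRange ιh)
    (T₁ : X →L[ℂ] D)
    (hT₁ : ∀ a b : A, T₁ (ιh (a ⊗ₜ[ℂ] b)) = φ a * e₂ b) :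
    Function.Injective T₁ ∧ ∀ x : A ⊗[ℂ] A, T₁ (ιh x) = 0 → x = 0 := by
  let _ : CStarAlgebra A := {}
  exact T1_injective_of_faithful_invariant_state_general (e₁ : A →ₐ[ℂ] D) e₂ j hj hjdense h
    hfaithful (S₁ h) (hS₁ h) φ hrightinv ιh hiso hdense T₁ hT₁
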